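/- arXiv:1512.03024 — 8 statements merged into one kernel-verified Lean document; each statement's English description precedes it below -/
import Mathlib

section
/- For every finite set S ⊆ ℕ, the function g := Σ_{n∈S} fₙ satisfies g′(1) = card S, i.e. the complex derivative at 1 of the finite sum of the functions fₙ over n ∈ S equals the number of elements of S. -/
/-- `xₙ = 1 + 2^((n+1)/(2^(n+1)+1))`. -/
noncomputable def xpt (n : ℕ) : ℝ :=
  1 + (2 : ℝ) ^ (((n : ℝ) + 1) / ((2 : ℝ) ^ (n + 1) + 1))

/-- `fₙ(z) = (z − xₙ)^(−2^(n+1))`. -/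
noncomputable def fseq (n : ℕ) (z : ℂ) : ℂ :=
  (z - (xpt n : ℂ)) ^ (-(2 : ℤ) ^ (n + 1))

lemma hasDerivAt_fseq_one (n : ℕ) : HasDerivAt (fseq n) 1 1 := by
  set a : ℝ := (2 : ℝ) ^ (((n : ℝ) + 1) / ((2 : ℝ) ^ (n + 1) + 1)) with ha
  have hapos : 0 < a := by positivity
  have hpow : a ^ (2 ^ (n + 1) + 1) = (2 : ℝ) ^ (n + 1) := by
    rw [ha, ← Real.rpow_natCast, ← Real.rpow_mul (by norm_num), ← Real.rpow_natCast 2 (n + 1)]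
    congr 1
    rw [Real.rpow_natCast]
    push_cast
    have : (2 : ℝ) ^ (n + 1) + 1 ≠ 0 := by positivity
    field_simp
  have hpowC : (a : ℂ) ^ (2 ^ (n + 1) + 1) = (2 : ℂ) ^ (n + 1) := by exact_mod_cast hpow
  have hx : (1 : ℂ) - (xpt n : ℂ) = -(a : ℂ) := by
    simp only [xpt, ← ha]
    push_cast
    ring
  have haC : (a : ℂ) ≠ 0 := by exact_mod_cast hapos.ne'
  have hne : (1 : ℂ) - (xpt n : ℂ) ≠ 0 := by rw [hx]; exact neg_ne_zero.mpr haC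
  have h1 : HasDerivAt (fun z : ℂ => z - (xpt n : ℂ)) 1 1 := (hasDerivAt_id 1).sub_const _
  have h2 := (hasDerivAt_zpow (-(2 : ℤ) ^ (n + 1)) ((1 : ℂ) - (xpt n : ℂ)) (Or.inl hne)).comp
    (1 : ℂ) h1
  refine HasDerivAt.congr_deriv (f := fseq n) h2 ?_
  have he : (-(2 : ℤ) ^ (n + 1) - 1) = -((2 ^ (n + 1) + 1 : ℕ) : ℤ) := by push_cast; ring
  have hodd : Odd (2 ^ (n + 1) + 1) := by
    refine Even.add_one ?_
    exact (even_two).pow_of_ne_zero (by omega)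
  rw [he, zpow_neg, zpow_natCast, hx, hodd.neg_pow, hpowC]
  push_cast
  have : (2 : ℂ) ^ (n + 1) ≠ 0 := pow_ne_zero _ two_ne_zero
  field_simp

/-- The derivative at `1` of a finite sum `Σ_{n ∈ S} fₙ` equals `card S`. -/
theorem deriv_sum_fseq_one (S : Finset ℕ) :
    deriv (fun z : ℂ => ∑ n ∈ S, fseq n z) 1 = (S.card : ℂ) := by
  have h := HasDerivAt.fun_sum (u := S) (fun n _ => hasDerivAt_fseq_one n)
  rw [h.deriv]
  simp
end

section
/- For every n ∈ ℕ and every x ∈ ℝ with |x| < 1, the n-th iterated derivative of f satisfies f⁽ⁿ⁾(x) = (P n).eval x · exp(x²/(x²−1)) · (1 − x²)^(−2n). -/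
open Polynomial

/-- The standard bump function `f(x) = exp(x²/(x²−1))` for `|x| < 1`, and `0` otherwise. -/
noncomputable def bump (x : ℝ) : ℝ :=
  if |x| < 1 then Real.exp (x ^ 2 / (x ^ 2 - 1)) else 0

/-- The polynomials `P₀ = 1`, `Pₙ₊₁ = (1−X²)² Pₙ′ + 2((2n−1)X − 2nX³) Pₙ`. -/
noncomputable def bumpPoly : ℕ → Polynomial ℝ
  | 0 => 1
  | n + 1 =>
      (1 - X ^ 2) ^ 2 * (bumpPoly n).derivative +
        (C (4 * (n : ℝ) - 2) * X - C (4 * (n : ℝ)) * X ^ 3) * bumpPoly n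

/-- For `|x| < 1`, `f⁽ⁿ⁾(x) = Pₙ(x) · exp(x²/(x²−1)) · (1 − x²)^(−2n)`. -/
theorem iteratedDeriv_bump_eq (n : ℕ) (x : ℝ) (hx : |x| < 1) :
    iteratedDeriv n bump x =
      (bumpPoly n).eval x * Real.exp (x ^ 2 / (x ^ 2 - 1)) *
        (1 - x ^ 2) ^ (-(2 * (n : ℤ))) := by
  induction n generalizing x with
  | zero => simp [bump, bumpPoly, hx]
  | succ n ih =>
    have hev : iteratedDeriv n bump =ᶠ[nhds x] fun y =>
        (bumpPoly n).eval y * Real.exp (y ^ 2 / (y ^ 2 - 1)) *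
          (1 - y ^ 2) ^ (-(2 * (n : ℤ))) := by
      have ho : IsOpen {y : ℝ | |y| < 1} := isOpen_lt continuous_abs continuous_const
      filter_upwards [ho.mem_nhds hx] with y hy
      exact ih y hy
    rw [iteratedDeriv_succ, hev.deriv_eq]
    have h1 : (1 - x ^ 2) ≠ 0 := by
      have := (sq_lt_one_iff_abs_lt_one x).2 hx
      linarith
    have h2 : (x ^ 2 - 1) ≠ 0 := fun h => h1 (by linarith)
    have hsq : HasDerivAt (fun y : ℝ => y ^ 2) (2 * x) x := by
      simpa using hasDerivAt_pow 2 x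
    have he := (hsq.fun_div (hsq.sub_const 1) h2).exp
    have hz := (hasDerivAt_zpow (-(2 * (n : ℤ))) (1 - x ^ 2) (Or.inl h1)).comp x
      (hsq.const_sub 1)
    have hd := (((bumpPoly n).hasDerivAt x).fun_mul he).fun_mul hz
    refine hd.deriv.trans ?_
    have e1 : (1 - x ^ 2) ^ (-(2 * (n : ℤ)) - 1)
        = (1 - x ^ 2) ^ (-(2 * (n : ℤ))) / (1 - x ^ 2) := zpow_sub_one₀ h1 _
    have e2 : (1 - x ^ 2) ^ (-(2 * ((n + 1 : ℕ) : ℤ)))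
        = (1 - x ^ 2) ^ (-(2 * (n : ℤ))) / (1 - x ^ 2) ^ 2 := by
      rw [show (-(2 * ((n + 1 : ℕ) : ℤ))) = -(2 * (n : ℤ)) - 2 by push_cast; ring,
        zpow_sub₀ h1]
      norm_cast
    rw [e2]
    simp only [Function.comp, e1, bumpPoly]
    generalize (1 - x ^ 2) ^ (-(2 * (n : ℤ))) = Z
    generalize Real.exp (x ^ 2 / (x ^ 2 - 1)) = E
    rw [show x ^ 2 - 1 = -(1 - x ^ 2) by ring]
    simp only [eval_add, eval_mul, eval_sub, eval_pow, eval_one, eval_X, eval_C]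
    push_cast
    field_simp
    ring
end

section
/- For every n ≥ 1 and every x ∈ ℝ with |x| < 1, it holds that (1 − x²)^(−2n) · exp(x²/(x²−1)) ≤ n^(4n) + 1. -/
/-- For `n ≥ 1` and `|x| < 1`, `(1 − x²)^(−2n) · exp(x²/(x²−1)) ≤ n^(4n) + 1`. -/
theorem inv_pow_mul_exp_le (n : ℕ) (hn : 1 ≤ n) (x : ℝ) (hx : |x| < 1) :
    (1 - x ^ 2) ^ (-(2 * (n : ℤ))) * Real.exp (x ^ 2 / (x ^ 2 - 1)) ≤
      (n : ℝ) ^ (4 * n) + 1 := by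
  have hx2 : 0 < 1 - x ^ 2 := by
    have := (sq_lt_one_iff_abs_lt_one x).2 hx
    linarith
  have hn0 : (1 : ℝ) ≤ n := by exact_mod_cast hn
  have hnp : (0 : ℝ) < n := by linarith
  obtain ⟨t, ht⟩ : ∃ t, t = (1 - x ^ 2)⁻¹ := ⟨_, rfl⟩
  have htp : 0 < t := by rw [ht]; positivity
  have h1 : (1 - x ^ 2) ^ (-(2 * (n : ℤ))) = t ^ (2 * n) := by
    rw [ht, zpow_neg, inv_pow]
    norm_cast
  have h2 : x ^ 2 / (x ^ 2 - 1) = 1 - t := by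
    have h3 : x ^ 2 - 1 ≠ 0 := by linarith
    rw [ht]
    have h4 : x ^ 2 - 1 = -(1 - x ^ 2) := by ring
    rw [h4]
    field_simp
    ring
  rw [h1, h2]
  have h5 : t ≤ 2 * n * Real.exp (t / (2 * n) - 1) := by
    have := Real.add_one_le_exp (t / (2 * n) - 1)
    calc t = 2 * n * (t / (2 * n) - 1 + 1) := by field_simp; ring
      _ ≤ _ := by gcongr
  have h6 : t ^ (2 * n) ≤ (2 * n : ℝ) ^ (2 * n) * Real.exp (t - 2 * n) := by
    calc t ^ (2 * n) ≤ (2 * n * Real.exp (t / (2 * n) - 1)) ^ (2 * n) := by gcongr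
      _ = _ := by
        rw [mul_pow, ← Real.exp_nat_mul]
        congr 2
        push_cast
        field_simp
  have h7 : t ^ (2 * n) * Real.exp (1 - t) ≤ (2 * n : ℝ) ^ (2 * n) * Real.exp (1 - 2 * n) := by
    calc _ ≤ (2 * n : ℝ) ^ (2 * n) * Real.exp (t - 2 * n) * Real.exp (1 - t) := by gcongr
      _ = _ := by
        rw [mul_assoc, ← Real.exp_add]
        congr 2
        ring
  refine h7.trans ?_
  rcases Nat.lt_or_ge 1 n with h | h
  · have h8 : (2 : ℝ) ≤ n := by exact_mod_cast h
    have h9 : Real.exp (1 - 2 * n) ≤ 1 := Real.exp_le_one_iff.2 (by linarith)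
    calc (2 * n : ℝ) ^ (2 * n) * Real.exp (1 - 2 * n) ≤ (n * n : ℝ) ^ (2 * n) * 1 := by gcongr
      _ = (n : ℝ) ^ (4 * n) := by rw [mul_one, ← pow_two, ← pow_mul]; congr 1; ring
      _ ≤ _ := by linarith
  · obtain rfl : n = 1 := by omega
    have h10 : Real.exp (-1) * Real.exp 1 = 1 := by rw [← Real.exp_add]; simp
    have h11 := Real.add_one_le_exp (1 : ℝ)
    have h12 := Real.exp_pos (-1)
    norm_num
    nlinarith
end

section
/- For every n ≥ 1 and every x ∈ ℝ, the n-th iterated derivative of f satisfies |f⁽ⁿ⁾(x)| ≤ (17n)^(4n); that is, ‖f⁽ⁿ⁾‖_∞ ≤ (17n)^(4n). -/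
/-- Monomial-type building blocks. -/
noncomputable def bumpG (a b : ℕ) (x : ℝ) : ℝ :=
  x ^ a * ((1 - x ^ 2)⁻¹) ^ b * Real.exp (1 - (1 - x ^ 2)⁻¹)

lemma one_sub_sq_pos_of {x : ℝ} (hx : |x| < 1) : 0 < 1 - x ^ 2 := by
  have := (sq_lt_one_iff_abs_lt_one x).2 hx
  linarith

lemma bumpG_contDiffAt (a b n : ℕ) {x : ℝ} (hx : |x| < 1) : ContDiffAt ℝ n (bumpG a b) x := by
  have h := (one_sub_sq_pos_of hx).ne'
  have h2 : ContDiffAt ℝ n (fun x : ℝ => (1 - x ^ 2)⁻¹) x :=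
    ContDiffAt.inv (by fun_prop) h
  unfold bumpG
  exact ((contDiffAt_id.pow a).mul (h2.pow b)).mul (contDiffAt_const.sub h2).exp

lemma bumpG_hasDerivAt (a b : ℕ) {x : ℝ} (hx : |x| < 1) :
    HasDerivAt (bumpG a b)
      (a * bumpG (a - 1) b x + (2 * b * bumpG (a + 1) (b + 1) x
        + (-2) * bumpG (a + 1) (b + 2) x)) x := by
  have h := (one_sub_sq_pos_of hx).ne'
  have h1 : HasDerivAt (fun x : ℝ => (1 - x ^ 2)⁻¹) (2 * x * ((1 - x ^ 2)⁻¹) ^ 2) x := by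
    have := (((hasDerivAt_id x).pow 2).const_sub 1).inv h
    refine HasDerivAt.congr_deriv (f := fun x : ℝ => (1 - x ^ 2)⁻¹) this ?_
    simp only [Pi.pow_apply, id]
    field_simp
    norm_num [mul_comm]
  have h3 := (((hasDerivAt_id x).pow a).mul (h1.pow b)).mul (h1.const_sub 1).exp
  have e : bumpG a b = (id ^ a * (fun x : ℝ => (1 - x ^ 2)⁻¹) ^ b) *
      fun x : ℝ => Real.exp (1 - (1 - x ^ 2)⁻¹) := by
    funext y; simp [bumpG]
  rw [e]
  refine HasDerivAt.congr_deriv h3 ?_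
  simp only [bumpG, Pi.mul_apply, Pi.pow_apply, id]
  rcases b with _ | b
  · simp; ring
  · simp only [Nat.add_sub_cancel]; push_cast; ring

lemma bumpG_bound (a b N : ℕ) (hb : b ≤ N) {x : ℝ} (hx : |x| < 1) :
    |bumpG a b x| ≤ 3 * N.factorial := by
  have h := one_sub_sq_pos_of hx
  have ht : 1 ≤ (1 - x ^ 2)⁻¹ := (one_le_inv₀ h).2 (by nlinarith [sq_nonneg x])
  unfold bumpG
  set t := (1 - x ^ 2)⁻¹
  rw [abs_mul, abs_mul, abs_pow, abs_of_nonneg (by positivity : 0 ≤ t ^ b), Real.abs_exp]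
  have h1 : |x| ^ a ≤ 1 := pow_le_one₀ (abs_nonneg x) hx.le
  have h2 : t ^ b ≤ t ^ N := pow_le_pow_right₀ ht hb
  have h3 : t ^ N / N.factorial ≤ Real.exp t := Real.pow_div_factorial_le_exp t (by linarith) N
  have h4 : t ^ N ≤ Real.exp t * N.factorial := by
    rwa [div_le_iff₀ (by positivity)] at h3
  have h5 : Real.exp t * Real.exp (1 - t) ≤ 3 := by
    rw [← Real.exp_add]; simp only [add_sub_cancel]; linarith [Real.exp_one_lt_d9]
  calc |x| ^ a * t ^ b * Real.exp (1 - t) ≤ 1 * (Real.exp t * N.factorial) * Real.exp (1 - t) := by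
        gcongr; exact h2.trans h4
    _ = (Real.exp t * Real.exp (1 - t)) * N.factorial := by ring
    _ ≤ 3 * N.factorial := by gcongr

lemma bumpG_iter (N n : ℕ) : ∀ a b : ℕ, a + n ≤ N → b + 2 * n ≤ N → ∀ x : ℝ, |x| < 1 →
    |iteratedDeriv n (bumpG a b) x| ≤ (3 * N + 2 : ℝ) ^ n * (3 * N.factorial) := by
  induction n with
  | zero =>
    intro a b ha hb x hx
    simpa using bumpG_bound a b N (by omega) hx
  | succ n ih =>
    intro a b ha hb x hx
    have ev : deriv (bumpG a b) =ᶠ[nhds x] (fun y => (a : ℝ) * bumpG (a - 1) b y +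
        (2 * b * bumpG (a + 1) (b + 1) y + (-2) * bumpG (a + 1) (b + 2) y)) := by
      filter_upwards [(isOpen_lt continuous_abs continuous_const).mem_nhds hx] with y hy
      exact (bumpG_hasDerivAt a b hy).deriv
    have c1 := bumpG_contDiffAt (a - 1) b n hx
    have c2 := bumpG_contDiffAt (a + 1) (b + 1) n hx
    have c3 := bumpG_contDiffAt (a + 1) (b + 2) n hx
    rw [iteratedDeriv_succ', ev.iteratedDeriv_eq,
      iteratedDeriv_fun_add (contDiffAt_const.mul c1)
        ((contDiffAt_const.mul c2).add (contDiffAt_const.mul c3)),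
      iteratedDeriv_fun_add (contDiffAt_const.mul c2) (contDiffAt_const.mul c3),
      iteratedDeriv_const_mul_field, iteratedDeriv_const_mul_field,
      iteratedDeriv_const_mul_field]
    have i1 := ih (a - 1) b (by omega) (by omega) x hx
    have i2 := ih (a + 1) (b + 1) (by omega) (by omega) x hx
    have i3 := ih (a + 1) (b + 2) (by omega) (by omega) x hx
    set K := (3 * N + 2 : ℝ) ^ n * (3 * N.factorial) with hK
    have hK0 : 0 ≤ K := by positivity
    have haN : (a : ℝ) ≤ N := by exact_mod_cast (by omega : a ≤ N)
    have hbN : (b : ℝ) ≤ N := by exact_mod_cast (by omega : b ≤ N)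
    refine (abs_add_le _ _).trans ?_
    refine (add_le_add_right (abs_add_le _ _) _).trans ?_
    rw [abs_mul, abs_mul (2 * (b : ℝ)), abs_mul (-2 : ℝ), abs_of_nonneg (by positivity : (0 : ℝ) ≤ a),
      abs_of_nonneg (by positivity : (0 : ℝ) ≤ 2 * b), (by norm_num : |(-2 : ℝ)| = 2)]
    calc _ ≤ (N : ℝ) * K + (2 * N * K + 2 * K) := by gcongr
      _ = _ := by rw [hK]; ring

lemma bump_eq_glue : bump = fun x => Real.exp 1 * expNegInvGlue (1 - x ^ 2) := by
  funext x
  unfold bump expNegInvGlue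
  by_cases hx : |x| < 1
  · have h := one_sub_sq_pos_of hx
    rw [if_pos hx, if_neg (not_le.2 h), ← Real.exp_add]
    congr 1
    have : x ^ 2 - 1 ≠ 0 := by linarith
    have := h.ne'
    field_simp
    ring
  · have : ¬ x ^ 2 < 1 := fun h => hx ((sq_lt_one_iff_abs_lt_one x).1 h)
    rw [if_neg hx, if_pos (by linarith), mul_zero]

lemma bump_contDiff (n : ℕ) : ContDiff ℝ n bump := by
  rw [bump_eq_glue]
  exact contDiff_const.mul (expNegInvGlue.contDiff.comp (contDiff_const.sub (contDiff_id.pow 2)))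

lemma bump_num (n : ℕ) (hn : 1 ≤ n) :
    (3 * (2 * n : ℕ) + 2 : ℝ) ^ n * (3 * (2 * n).factorial) ≤ (17 * (n : ℝ)) ^ (4 * n) := by
  have hn' : (1 : ℝ) ≤ n := by exact_mod_cast hn
  have h1 : ((2 * n).factorial : ℝ) ≤ (2 * n : ℝ) ^ (2 * n) := by
    exact_mod_cast Nat.factorial_le_pow (2 * n)
  have h3 : (3 : ℝ) ≤ 3 ^ n := le_self_pow₀ (by norm_num) (by omega)
  calc (3 * (2 * n : ℕ) + 2 : ℝ) ^ n * (3 * (2 * n).factorial)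
      ≤ (8 * n : ℝ) ^ n * (3 ^ n * (2 * n : ℝ) ^ (2 * n)) := by
        gcongr
        push_cast; linarith
    _ = (96 * (n : ℝ) ^ 3) ^ n := by
        rw [pow_mul, ← mul_pow, ← mul_pow]; congr 1; ring
    _ ≤ ((17 * (n : ℝ)) ^ 4) ^ n := by
        gcongr
        have : (n : ℝ) ^ 3 ≤ (n : ℝ) ^ 4 := pow_le_pow_right₀ hn' (by norm_num)
        have : (0 : ℝ) ≤ (n : ℝ) ^ 3 := by positivity
        rw [mul_pow]; linarith
    _ = _ := by rw [← pow_mul]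

lemma bump_bound_off (n : ℕ) (hn : 1 ≤ n) (x : ℝ) (hx : |x| ≠ 1) :
    |iteratedDeriv n bump x| ≤ (17 * (n : ℝ)) ^ (4 * n) := by
  rcases lt_or_gt_of_ne hx with h | h
  · have ev : bump =ᶠ[nhds x] bumpG 0 0 := by
      filter_upwards [(isOpen_lt continuous_abs continuous_const).mem_nhds h] with y hy
      have h := one_sub_sq_pos_of hy
      have h' : y ^ 2 - 1 ≠ 0 := by linarith
      have := h.ne'
      simp only [bump, bumpG, if_pos (show |y| < 1 from hy), pow_zero, one_mul]
      congr 1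
      field_simp
      ring
    rw [ev.iteratedDeriv_eq]
    exact (bumpG_iter (2 * n) n 0 0 (by omega) (by omega) x h).trans (bump_num n hn)
  · have ev : bump =ᶠ[nhds x] fun _ => 0 := by
      filter_upwards [(isOpen_lt continuous_const continuous_abs).mem_nhds h] with y hy
      exact if_neg (not_lt.2 (le_of_lt hy))
    rw [ev.iteratedDeriv_eq]
    simp only [iteratedDeriv_fun_const_zero, abs_zero]
    positivity

/-- For `n ≥ 1`, `‖f⁽ⁿ⁾‖_∞ ≤ (17n)^(4n)`. -/
theorem iteratedDeriv_bump_bound (n : ℕ) (hn : 1 ≤ n) (x : ℝ) :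
    |iteratedDeriv n bump x| ≤ (17 * (n : ℝ)) ^ (4 * n) := by
  have hc : Continuous (iteratedDeriv n bump) := (bump_contDiff n).continuous_iteratedDeriv n le_rfl
  have hcl : IsClosed {x : ℝ | |iteratedDeriv n bump x| ≤ (17 * (n : ℝ)) ^ (4 * n)} :=
    isClosed_le hc.abs continuous_const
  have hd : Dense (({1, -1} : Set ℝ)ᶜ) := (Set.toFinite ({1, -1} : Set ℝ)).countable.dense_compl ℝ
  have hsub : ({1, -1} : Set ℝ)ᶜ ⊆
      {x : ℝ | |iteratedDeriv n bump x| ≤ (17 * (n : ℝ)) ^ (4 * n)} := by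
    intro y hy
    refine bump_bound_off n hn y fun h => hy ?_
    rcases (abs_eq zero_le_one).1 h with h | h <;> simp [h]
  exact hcl.closure_subset_iff.2 hsub (hd x)
end

section
/- For every λ ∈ ℝ, every d ∈ ℕ, every m ≥ 1 and every x ∈ ℝ, the shifted bump function f_λ(x) := f(x − λ) satisfies |x|^d · |f⁽ᵐ⁾(x − λ)| ≤ (|λ| + 1)^d · (17m)^(4m); i.e. the Schwartz seminorms obey ‖f_λ‖_{d,m} := sup_x |x^d f_λ⁽ᵐ⁾(x)| ≤ (|λ|+1)^d (17m)^(4m). -/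
/-- Functions that are finite sums of monomials of degree at most `N`, with total coefficient
weight at most `C`. -/
inductive Bd (N : ℕ) : ℝ → (ℝ → ℝ) → Prop
  | mono (c C : ℝ) (i : ℕ) (hc : |c| ≤ C) (hi : i ≤ N) : Bd N C (fun x => c * x ^ i)
  | add (C D : ℝ) (p q : ℝ → ℝ) (hp : Bd N C p) (hq : Bd N D q) : Bd N (C + D) (fun x => p x + q x)

theorem Bd.nonneg {N : ℕ} {C : ℝ} {p : ℝ → ℝ} (h : Bd N C p) : 0 ≤ C := by
  induction h with
  | mono c C i hc hi => exact (abs_nonneg c).trans hc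
  | add C D p q _ _ h1 h2 => linarith

theorem Bd.weaken {N : ℕ} {C D : ℝ} {p : ℝ → ℝ} (h : Bd N C p) (hD : C ≤ D) : Bd N D p := by
  have h0 : Bd N (D - C) (fun x => 0 * x ^ 0) := Bd.mono 0 _ 0 (by simpa using hD) (Nat.zero_le _)
  have h1 := Bd.add _ _ _ _ h h0
  simpa using h1

theorem Bd.le {N : ℕ} {C : ℝ} {p : ℝ → ℝ} (h : Bd N C p) (x : ℝ) (hx : |x| ≤ 1) : |p x| ≤ C := by
  induction h with
  | mono c C i hc hi =>
    rw [abs_mul, abs_pow]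
    have : |x| ^ i ≤ 1 := pow_le_one₀ (abs_nonneg x) hx
    nlinarith [abs_nonneg c]
  | add C D p q _ _ h1 h2 => exact (abs_add_le _ _).trans (add_le_add h1 h2)

theorem Bd.mul {N : ℕ} {C : ℝ} {p : ℝ → ℝ} (h : Bd N C p) (a : ℝ) (j M : ℕ) (hM : N + j ≤ M) :
    Bd M (|a| * C) (fun x => a * x ^ j * p x) := by
  induction h with
  | mono c C i hc hi =>
    have h1 : Bd M (|a| * C) (fun x => (a * c) * x ^ (j + i)) :=
      Bd.mono _ _ _ (by rw [abs_mul]; gcongr) (by omega)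
    convert h1 using 2 with x
    ring
  | add C D p q _ _ h1 h2 =>
    have := Bd.add _ _ _ _ h1 h2
    rw [← mul_add] at this
    convert this using 2 with x
    ring

theorem Bd.deriv {N : ℕ} {C : ℝ} {p : ℝ → ℝ} (h : Bd N C p) :
    ∃ q, Bd N (N * C) q ∧ ∀ x, HasDerivAt p (q x) x := by
  induction h with
  | mono c C i hc hi =>
    refine ⟨fun x => (i * c) * x ^ (i - 1), Bd.mono _ _ _ ?_ (by omega), fun x => ?_⟩
    · rw [abs_mul, Nat.abs_cast]
      gcongr
    · have := (hasDerivAt_pow i x).const_mul c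
      exact this.congr_deriv (by ring)
  | add C D p q _ _ h1 h2 =>
    obtain ⟨p', hp, hp'⟩ := h1
    obtain ⟨q', hq, hq'⟩ := h2
    refine ⟨fun x => p' x + q' x, ?_, fun x => (hp' x).add (hq' x)⟩
    rw [mul_add]
    exact Bd.add _ _ _ _ hp hq

theorem exp_bound (x : ℝ) (hx : |x| < 1) (k : ℕ) :
    ((1 - x ^ 2)⁻¹) ^ k * Real.exp (x ^ 2 / (x ^ 2 - 1)) ≤ 3 * (k.factorial : ℝ) := by
  have h1 : 0 < 1 - x ^ 2 := by
    have := (sq_lt_one_iff_abs_lt_one x).2 hx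
    linarith
  have h2 : x ^ 2 / (x ^ 2 - 1) = 1 - (1 - x ^ 2)⁻¹ := by
    have : x ^ 2 - 1 ≠ 0 := by linarith
    field_simp
    ring
  have hu : 0 < (1 - x ^ 2)⁻¹ := inv_pos.2 h1
  rw [h2, Real.exp_sub]
  have h3 := Real.pow_div_factorial_le_exp _ hu.le k
  have hk : (0 : ℝ) < k.factorial := by exact_mod_cast k.factorial_pos
  rw [div_le_iff₀ hk] at h3
  rw [← mul_div_assoc, div_le_iff₀ (Real.exp_pos _)]
  have h4 : Real.exp 1 ≤ 3 := by linarith [Real.exp_one_lt_d9]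
  have h5 := Real.exp_pos (1 - x ^ 2)⁻¹
  calc _ ≤ (Real.exp (1 - x ^ 2)⁻¹ * k.factorial) * 3 := by
        gcongr
    _ = _ := by ring

/-- Candidate form of the derivatives. -/
noncomputable def G (n : ℕ) (p : ℝ → ℝ) (x : ℝ) : ℝ :=
  if |x| < 1 then p x * (((1 - x ^ 2)⁻¹) ^ (2 * n) * Real.exp (x ^ 2 / (x ^ 2 - 1))) else 0

theorem G_deriv_out (n N : ℕ) (C : ℝ) (p : ℝ → ℝ) (hp : Bd N C p) (a : ℝ) (ha : 1 ≤ |a|) :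
    HasDerivAt (G n p) 0 a := by
  have key : ∀ x, |G n p x| ≤ (C * (3 * ((2 * n + 2).factorial : ℝ)) * 4) * |x - a| ^ 2 := by
    intro x
    have hC := hp.nonneg
    unfold G
    split_ifs with hx
    · have h1 : 0 < 1 - x ^ 2 := by
        have := (sq_lt_one_iff_abs_lt_one x).2 hx
        linarith
      have e := exp_bound x hx (2 * n + 2)
      have h2 : 1 - x ^ 2 ≤ 2 * |x - a| := by
        have : |a| - |x| ≤ |x - a| := by
          rw [abs_sub_comm]; exact abs_sub_abs_le_abs_sub a x
        nlinarith [sq_abs x, abs_nonneg x]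
      have h3 : ((1 - x ^ 2)⁻¹) ^ (2 * n) * Real.exp (x ^ 2 / (x ^ 2 - 1)) =
          (((1 - x ^ 2)⁻¹) ^ (2 * n + 2) * Real.exp (x ^ 2 / (x ^ 2 - 1))) * (1 - x ^ 2) ^ 2 := by
        rw [pow_add]
        field_simp
      rw [h3, abs_mul]
      have h4 : (1 - x ^ 2) ^ 2 ≤ 4 * |x - a| ^ 2 := by
        calc _ ≤ (2 * |x - a|) ^ 2 := by gcongr
          _ = _ := by ring
      rw [abs_of_nonneg (a := _ * (1 - x ^ 2) ^ 2) (by positivity)]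
      calc _ ≤ C * ((3 * ((2 * n + 2).factorial : ℝ)) * (4 * |x - a| ^ 2)) := by
            gcongr
            exact hp.le x hx.le
        _ = _ := by ring
    · rw [abs_zero]; positivity
  have hGa : G n p a = 0 := by
    unfold G; rw [if_neg (not_lt.2 ha)]
  rw [hasDerivAt_iff_isLittleO]
  simp only [hGa, smul_zero, sub_zero]
  have hO : (G n p) =O[nhds a] (fun x => (x - a) ^ 2) := by
    refine Asymptotics.IsBigO.of_bound (C * (3 * ((2 * n + 2).factorial : ℝ)) * 4) (Filter.Eventually.of_forall fun x => ?_)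
    rw [Real.norm_eq_abs, norm_pow, Real.norm_eq_abs]
    exact key x
  refine hO.trans_isLittleO ?_
  simpa using Asymptotics.isLittleO_pow_sub_sub a (m := 2) (by norm_num)

theorem G_deriv_in (n : ℕ) (p q : ℝ → ℝ) (hq : ∀ x, HasDerivAt p (q x) x) (x : ℝ) (hx : |x| < 1) :
    HasDerivAt (G n p) (G (n + 1) (fun x => q x * (1 - x ^ 2) ^ 2 +
      (4 * n * x * (1 - x ^ 2) - 2 * x) * p x) x) x := by
  have h1 : 0 < 1 - x ^ 2 := by
    have := (sq_lt_one_iff_abs_lt_one x).2 hx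
    linarith
  have hne : x ^ 2 - 1 ≠ 0 := by linarith
  have hsq : HasDerivAt (fun y : ℝ => y ^ 2) (2 * x) x := by
    simpa using hasDerivAt_pow 2 x
  have d1 : HasDerivAt (fun y : ℝ => ((1 - y ^ 2)⁻¹)) (2 * x * ((1 - x ^ 2)⁻¹) ^ 2) x := by
    refine ((hsq.const_sub 1).fun_inv h1.ne').congr_deriv ?_
    rw [inv_pow]
    field_simp
  have d2 := d1.fun_pow (2 * n)
  have d3 : HasDerivAt (fun y : ℝ => Real.exp (y ^ 2 / (y ^ 2 - 1)))
      (Real.exp (x ^ 2 / (x ^ 2 - 1)) * (-2 * x * ((1 - x ^ 2)⁻¹) ^ 2)) x := by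
    have := (hsq.fun_div (hsq.sub_const 1) hne).exp
    convert this using 2
    rw [show (1 - x ^ 2)⁻¹ = - (x ^ 2 - 1)⁻¹ by rw [← inv_neg]; ring_nf]
    field_simp
    ring
  have d4 := (hq x).fun_mul (d2.fun_mul d3)
  have hev : (G n p) =ᶠ[nhds x] (fun y => p y * (((1 - y ^ 2)⁻¹) ^ (2 * n) *
      Real.exp (y ^ 2 / (y ^ 2 - 1)))) := by
    have : ∀ᶠ y in nhds x, |y| < 1 := continuous_abs.continuousAt.eventually_lt_const hx
    filter_upwards [this] with y hy
    unfold G; rw [if_pos hy]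
  refine (d4.congr_of_eventuallyEq hev).congr_deriv ?_
  unfold G
  rw [if_pos hx]
  generalize Real.exp (x ^ 2 / (x ^ 2 - 1)) = E
  rcases n with _ | n
  · simp
    field_simp
  · rw [show 2 * (n + 1) - 1 = 2 * n + 1 by omega]
    rw [show 2 * (n + 1 + 1) = 2 * n + 4 by omega, show 2 * (n + 1) = 2 * n + 2 by omega]
    push_cast
    simp only [inv_pow]
    field_simp
    ring

theorem main_form (m : ℕ) (hm : 1 ≤ m) (n : ℕ) (hn : n ≤ m) :
    ∃ p, Bd (4 * n) ((26 * (m : ℝ)) ^ n) p ∧ iteratedDeriv n bump = G n p := by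
  induction n with
  | zero =>
    refine ⟨fun x => 1 * x ^ 0, Bd.mono _ _ _ (by simp) (by simp), ?_⟩
    funext x
    simp [G, bump]
  | succ n ih =>
    obtain ⟨p, hp, hG⟩ := ih (by omega)
    obtain ⟨q, hq, hd⟩ := hp.deriv
    refine ⟨fun x => q x * (1 - x ^ 2) ^ 2 + (4 * n * x * (1 - x ^ 2) - 2 * x) * p x, ?_, ?_⟩
    · have b1 := hq.mul 1 0 (4 * (n + 1)) (by omega)
      have b2 := hq.mul (-2) 2 (4 * (n + 1)) (by omega)
      have b3 := hq.mul 1 4 (4 * (n + 1)) (by omega)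
      have b4 := hp.mul (4 * n) 1 (4 * (n + 1)) (by omega)
      have b5 := hp.mul (-(4 * n)) 3 (4 * (n + 1)) (by omega)
      have b6 := hp.mul (-2) 1 (4 * (n + 1)) (by omega)
      have b := Bd.add _ _ _ _ b1 (Bd.add _ _ _ _ b2 (Bd.add _ _ _ _ b3
        (Bd.add _ _ _ _ b4 (Bd.add _ _ _ _ b5 b6))))
      have hw := Bd.weaken (D := (26 * (m : ℝ)) ^ (n + 1)) b (by
        have e1 : |(4 * n : ℝ)| = 4 * n := abs_of_nonneg (by positivity)
        rw [abs_neg, abs_neg, e1, abs_one, abs_two]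
        push_cast
        have h1 : (n : ℝ) + 1 ≤ m := by exact_mod_cast hn
        have h2 : (0 : ℝ) ≤ (26 * (m : ℝ)) ^ n := by positivity
        rw [pow_succ]
        nlinarith)
      convert hw using 2 with x
      ring
    · rw [iteratedDeriv_succ, hG]
      funext x
      by_cases hx : |x| < 1
      · exact (G_deriv_in n p q hd x hx).deriv
      · rw [(G_deriv_out n _ _ p hp x (not_lt.1 hx)).deriv]
        unfold G
        rw [if_neg hx]

theorem num_bound (m : ℕ) (hm : 1 ≤ m) :
    (26 * (m : ℝ)) ^ m * (3 * ((2 * m).factorial : ℝ)) ≤ (17 * (m : ℝ)) ^ (4 * m) := by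
  have h1 : ((2 * m).factorial : ℝ) ≤ ((2 * m : ℝ)) ^ (2 * m) := by
    exact_mod_cast Nat.factorial_le_pow (2 * m)
  have h3 : (3 : ℝ) ≤ 3 ^ m := by
    calc (3 : ℝ) = 3 ^ 1 := by norm_num
      _ ≤ 3 ^ m := pow_le_pow_right₀ (by norm_num) hm
  have hm' : (1 : ℝ) ≤ m := by exact_mod_cast hm
  calc _ ≤ (26 * (m : ℝ)) ^ m * (3 ^ m * (2 * m : ℝ) ^ (2 * m)) := by gcongr
    _ = (312 * (m : ℝ) ^ 3) ^ m := by
      rw [pow_mul, ← mul_pow, ← mul_pow]; congr 1; ring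
    _ ≤ ((17 * (m : ℝ)) ^ 4) ^ m := by
      gcongr
      have : (0 : ℝ) ≤ (m : ℝ) ^ 3 := by positivity
      nlinarith
    _ = _ := by rw [← pow_mul]

/-- The Schwartz seminorms of the shifted bump function `f_λ(x) = f(x − λ)` satisfy
`‖f_λ‖_{d,m} = sup_x |x^d f_λ⁽ᵐ⁾(x)| ≤ (|λ|+1)^d (17m)^(4m)` for `m ≥ 1`. -/
theorem shifted_bump_seminorm_bound (lam : ℝ) (d : ℕ) (m : ℕ) (hm : 1 ≤ m) (x : ℝ) :
    |x| ^ d * |iteratedDeriv m bump (x - lam)| ≤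
      (|lam| + 1) ^ d * (17 * (m : ℝ)) ^ (4 * m) := by
  obtain ⟨p, hp, hG⟩ := main_form m hm m le_rfl
  rw [hG]
  unfold G
  split_ifs with h
  · have hx : |x| ≤ |lam| + 1 := by
      have := abs_sub_abs_le_abs_sub x lam
      linarith
    gcongr
    refine le_trans ?_ (num_bound m hm)
    have hpos : 0 < 1 - (x - lam) ^ 2 := by
      have := (sq_lt_one_iff_abs_lt_one (x - lam)).2 h
      linarith
    rw [abs_mul, abs_of_nonneg (a := _ * Real.exp _) (by positivity)]
    exact mul_le_mul (hp.le _ h.le) (exp_bound _ h _) (by positivity) (by positivity)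
  · rw [abs_zero, mul_zero]; positivity
end

section
/- For every p : ℕ → ℕ and every i ∈ ℕ, g(2·p(i)) > 0. Consequently, if K ≥ 0 is such that g(x) = 0 for all x with |x| > K, then 2·p(i) ≤ K for all i ∈ ℕ (any bound on the support of g bounds the values of p). -/
/-- The coefficients `cᵢ = 2^(−(i+1)) · (2p(i)+1)^(−i) · (17i)^(−4i)`
(with the conventions `(2p(0)+1)⁰ = 1` and `(17·0)⁰ = 1`, so `c₀ = 1/2`). -/
noncomputable def coeffc (p : ℕ → ℕ) (i : ℕ) : ℝ :=
  (2 : ℝ) ^ (-((i : ℤ) + 1)) * ((2 * (p i : ℝ) + 1) ^ (-(i : ℤ))) *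
    ((17 * (i : ℝ)) ^ (-(4 * (i : ℤ))))

/-- `g(x) = Σᵢ cᵢ f(x − 2p(i))`. -/
noncomputable def gfun (p : ℕ → ℕ) (x : ℝ) : ℝ :=
  ∑' i : ℕ, coeffc p i * bump (x - 2 * (p i : ℝ))

theorem bump_nonneg_aux (x : ℝ) : 0 ≤ bump x := by
  unfold bump
  split_ifs
  · exact (Real.exp_pos _).le
  · exact le_rfl

theorem bump_le_one_aux (x : ℝ) : bump x ≤ 1 := by
  unfold bump
  split_ifs with h
  · rw [Real.exp_le_one_iff]
    have h1 : x ^ 2 < 1 := (sq_lt_one_iff_abs_lt_one x).2 h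
    exact div_nonpos_of_nonneg_of_nonpos (sq_nonneg x) (by linarith)
  · exact zero_le_one

theorem coeffc_pos_aux (p : ℕ → ℕ) (i : ℕ) : 0 < coeffc p i := by
  unfold coeffc
  rcases Nat.eq_zero_or_pos i with rfl | hi
  · simp
  · have : (0 : ℝ) < i := by exact_mod_cast hi
    positivity

theorem coeffc_le_aux (p : ℕ → ℕ) (i : ℕ) : coeffc p i ≤ (1 / 2 : ℝ) ^ i := by
  unfold coeffc
  have h1 : (2 : ℝ) ^ (-((i : ℤ) + 1)) ≤ (1 / 2 : ℝ) ^ i := by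
    rw [one_div, inv_pow, ← zpow_natCast, ← zpow_neg]
    exact zpow_le_zpow_right₀ (by norm_num) (by omega)
  have h2 : (2 * (p i : ℝ) + 1) ^ (-(i : ℤ)) ≤ 1 := by
    apply zpow_le_one_of_nonpos₀ _ (by omega)
    have : (0 : ℝ) ≤ p i := Nat.cast_nonneg _
    linarith
  have h3 : (17 * (i : ℝ)) ^ (-(4 * (i : ℤ))) ≤ 1 := by
    rcases Nat.eq_zero_or_pos i with rfl | hi
    · simp
    · have : (1 : ℝ) ≤ i := by exact_mod_cast hi
      exact zpow_le_one_of_nonpos₀ (by linarith) (by omega)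
  calc _ ≤ (1 / 2 : ℝ) ^ i * 1 * 1 := by gcongr
    _ = _ := by ring

theorem gfun_pos_aux (p : ℕ → ℕ) (i : ℕ) : 0 < gfun p (2 * (p i : ℝ)) := by
  unfold gfun
  have hn : ∀ j, 0 ≤ coeffc p j * bump (2 * (p i : ℝ) - 2 * (p j : ℝ)) := fun j =>
    mul_nonneg (coeffc_pos_aux p j).le (bump_nonneg_aux _)
  have hs : Summable fun j => coeffc p j * bump (2 * (p i : ℝ) - 2 * (p j : ℝ)) := by
    refine Summable.of_nonneg_of_le hn (fun j => ?_) summable_geometric_two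
    exact (mul_le_of_le_one_right (coeffc_pos_aux p j).le (bump_le_one_aux _)).trans
      (coeffc_le_aux p j)
  refine hs.tsum_pos hn i ?_
  refine mul_pos (coeffc_pos_aux p i) ?_
  simp [bump]

/-- `g` is positive at each point `2p(i)`; consequently any bound on the support of `g`
bounds all the values `2p(i)`. -/
theorem gfun_pos_at_shifts (p : ℕ → ℕ) :
    (∀ i : ℕ, 0 < gfun p (2 * (p i : ℝ))) ∧
      ∀ K : ℝ, 0 ≤ K → (∀ x : ℝ, K < |x| → gfun p x = 0) →
        ∀ i : ℕ, 2 * (p i : ℝ) ≤ K := by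
  refine ⟨gfun_pos_aux p, fun K _ h i => ?_⟩
  by_contra hlt
  push Not at hlt
  have h0 := h (2 * (p i : ℝ)) (hlt.trans_le (le_abs_self _))
  exact (gfun_pos_aux p i).ne' h0
end

section
/- Let p : ℕ → ℕ have bounded range and let N := max of the range of p. Then there exists a polynomial P ∈ ℂ[X] with natDegree P = N such that for every z ∈ ℂ the series Σ_{n=0}^∞ 2^(−(n + p(n))) · z^(p(n)) converges to P.eval z; moreover, for every k ∈ ℕ, the coefficient of X^k in P is nonzero if and only if k lies in the range of p. -/
/-- If `p : ℕ → ℕ` has bounded range with maximum `N`, then the series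
`Σₙ 2^(−(n+p(n))) z^(p(n))` sums to a polynomial of degree `N` whose `k`-th coefficient is
nonzero exactly when `k` is in the range of `p`. -/
theorem series_eq_polynomial (p : ℕ → ℕ) (N : ℕ) (hN : N ∈ Set.range p)
    (hmax : ∀ n : ℕ, p n ≤ N) :
    ∃ P : Polynomial ℂ, P.natDegree = N ∧
      (∀ z : ℂ, HasSum (fun n : ℕ => (2 : ℂ) ^ (-((n : ℤ) + (p n : ℤ))) * z ^ (p n))
        (P.eval z)) ∧
      ∀ k : ℕ, P.coeff k ≠ 0 ↔ k ∈ Set.range p := by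
  let a : ℕ → ℕ → ℝ := fun k n => if p n = k then (1/2 : ℝ) ^ (n + k) else 0
  have ha0 : ∀ k n, 0 ≤ a k n := by
    intro k n
    simp only [a]
    split_ifs <;> positivity
  have hs : ∀ k, Summable (a k) := by
    intro k
    refine Summable.of_nonneg_of_le (ha0 k) (fun n => ?_) summable_geometric_two
    simp only [a]
    split_ifs
    · exact pow_le_pow_of_le_one (by norm_num) (by norm_num) (by omega)
    · positivity
  let c : ℕ → ℝ := fun k => ∑' n, a k n
  have hc : ∀ k, c k ≠ 0 ↔ k ∈ Set.range p := by
    intro k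
    constructor
    · intro h
      by_contra hk
      apply h
      have : ∀ n, a k n = 0 := fun n => if_neg (fun h => hk ⟨n, h⟩)
      simp [c, this]
    · rintro ⟨n, hn⟩
      have : 0 < a k n := by
        simp only [a, if_pos hn]
        positivity
      exact ((hs k).tsum_pos (ha0 k) n this).ne'
  let P : Polynomial ℂ := ∑ k ∈ Finset.range (N + 1), Polynomial.C (c k : ℂ) * Polynomial.X ^ k
  have hP : ∀ k, P.coeff k ≠ 0 ↔ k ∈ Set.range p := by
    intro k
    have h1 : P.coeff k = if k < N + 1 then (c k : ℂ) else 0 := by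
      simp [P, Polynomial.finsetSum_coeff, Polynomial.coeff_X_pow]
    rw [h1, ← hc k]
    split_ifs with h
    · simp
    · have : k ∉ Set.range p := by
        rintro ⟨n, rfl⟩
        have := hmax n
        omega
      rw [← hc k] at this
      simpa using this
  refine ⟨P, ?_, ?_, hP⟩
  · apply le_antisymm
    · rw [Polynomial.natDegree_le_iff_coeff_eq_zero]
      intro k hk
      by_contra h
      obtain ⟨n, rfl⟩ := (hP k).1 h
      have := hmax n
      omega
    · exact Polynomial.le_natDegree_of_ne_zero ((hP N).2 hN)
  · intro z
    have h1 : ∀ k ∈ Finset.range (N + 1),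
        HasSum (fun n => (a k n : ℂ) * z ^ k) ((c k : ℂ) * z ^ k) := fun k _ =>
      (Complex.hasSum_ofReal.2 (hs k).hasSum).mul_right _
    have h2 := hasSum_sum h1
    have h3 : P.eval z = ∑ k ∈ Finset.range (N + 1), (c k : ℂ) * z ^ k := by
      simp [P, Polynomial.eval_finset_sum]
    rw [h3]
    convert h2 using 2 with n
    rw [Finset.sum_eq_single (p n)]
    · have : (2 : ℂ) ^ (-((n : ℤ) + (p n : ℤ))) = (1 / 2) ^ (n + p n) := by
        rw [zpow_neg, ← Nat.cast_add, zpow_natCast, one_div, inv_pow]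
      rw [this]
      simp [a]
    · intro k _ hk
      simp [a, hk.symm]
    · intro h
      have := hmax n
      simp at h
      omega
end

section
/- Let p : ℕ → ℕ. For each n ≤ p 0, define a(n) := 2^(−min{ i ∈ ℕ : p i ≤ p 0 and p 0 − p i = n }) if this set is nonempty, and a(n) := 0 otherwise, and let Q := Σ_{n=0}^{p 0} a(n) · X^n ∈ ℝ[X]. Then natDegree Q = p 0 − min(range p), where min(range p) denotes the least value attained by p. -/
open Polynomial Classical

/-- `a(n) = 2^(−min{ i | p i ≤ p 0 and p 0 − p i = n })`, and `0` if no such `i` exists. -/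

noncomputable def acoeff (p : ℕ → ℕ) (n : ℕ) : ℝ :=
  if ({i : ℕ | p i ≤ p 0 ∧ p 0 - p i = n} : Set ℕ).Nonempty then
    (2 : ℝ) ^ (-((sInf {i : ℕ | p i ≤ p 0 ∧ p 0 - p i = n} : ℕ) : ℤ))
  else 0

/-- The polynomial `Q = Σ_{n=0}^{p 0} a(n) Xⁿ`. -/
noncomputable def Qpoly (p : ℕ → ℕ) : Polynomial ℝ :=
  ∑ n ∈ Finset.range (p 0 + 1), C (acoeff p n) * X ^ n

/-- The degree of `Q` is `p 0 − min(range p)`. -/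
theorem natDegree_Qpoly (p : ℕ → ℕ) :
    (Qpoly p).natDegree = p 0 - sInf (Set.range p) := by
  have hcoeff : ∀ m, (Qpoly p).coeff m = if m < p 0 + 1 then acoeff p m else 0 := by
    intro m
    simp [Qpoly, Polynomial.finset_sum_coeff, Polynomial.coeff_C_mul, Polynomial.coeff_X_pow]
  obtain ⟨j, hj⟩ : sInf (Set.range p) ∈ Set.range p := Nat.sInf_mem ⟨p 0, 0, rfl⟩
  have hmin : ∀ i, sInf (Set.range p) ≤ p i := fun i => Nat.sInf_le ⟨i, rfl⟩
  apply Polynomial.natDegree_eq_of_le_of_coeff_ne_zero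
  · rw [Polynomial.natDegree_le_iff_coeff_eq_zero]
    intro m hm
    rw [hcoeff]
    split_ifs with h
    · unfold acoeff
      rw [if_neg]
      rintro ⟨i, hi1, hi2⟩
      have := hmin i
      omega
    · rfl
  · rw [hcoeff, if_pos (by omega)]
    unfold acoeff
    rw [if_pos ⟨j, hj ▸ hmin 0, by rw [hj]⟩]
    positivity
end
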